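/- Let Σ be an alphabet with at least two symbols and let Σ' be a nonempty proper subset of Σ. Then no monotone LIKE expression over Σ has language exactly Σ'* (the set of all strings all of whose symbols belong to Σ'). Hence monotone LIKE expressions are strictly weaker than general LIKE expressions. -/

import Mathlib

/-!
Call a position of a word of `L` sensitive if changing the letter there can lead out of `L`, and
let the sensitivity of `L` be the supremum of the numbers of sensitive positions in words of `L`.
Sensitivity is subadditive under concatenation and intersection, is at most the larger of the two
under union, and is at most one for each pattern symbol, since `%` absorbs every change of a
letter. Monotone LIKE expressions therefore have finite sensitivity, whereas in `Σ'*` every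
position of every word is sensitive.

For the separation, `NOT %b%` expresses the star of the subalphabet of letters other than `b`.
-/

/-- A symbol of a LIKE pattern: a constant letter, the single-character
wildcard `_`, or the multi-character wildcard `%`. -/
inductive LikeSym (α : Type) : Type where
  | const : α → LikeSym α
  | wild : LikeSym α      -- the single-character wildcard `_`
  | percent : LikeSym α   -- the multi-character wildcard `%`

/-- The strings matched by a single pattern symbol. -/
def SymMatches {α : Type} : LikeSym α → List α → Prop
  | .const a, w => w = [a]
  | .wild, w => w.length = 1
  | .percent, _ => True

/-- A string `w` matches a LIKE pattern `p` if `w` splits into consecutive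
factors, one per pattern symbol. -/
def Matches {α : Type} : List (LikeSym α) → List α → Prop
  | [], w => w = []
  | s :: p, w => ∃ u v, w = u ++ v ∧ SymMatches s u ∧ Matches p v


/-- A LIKE expression: a boolean combination (AND, OR, NOT) of LIKE patterns. -/
inductive LikeExpr (α : Type) : Type where
  | pat : List (LikeSym α) → LikeExpr α
  | and : LikeExpr α → LikeExpr α → LikeExpr α
  | or : LikeExpr α → LikeExpr α → LikeExpr α
  | not : LikeExpr α → LikeExpr α

/-- A string matches a LIKE expression if the boolean combination of the
individual pattern-matching conditions evaluates to true. -/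
def EMatches {α : Type} : LikeExpr α → List α → Prop
  | .pat p, w => Matches p w
  | .and e f, w => EMatches e w ∧ EMatches f w
  | .or e f, w => EMatches e w ∨ EMatches f w
  | .not e, w => ¬ EMatches e w

/-- A LIKE expression is monotone if it contains no negation. -/
def MonotoneExpr {α : Type} : LikeExpr α → Prop
  | .pat _ => True
  | .and e f => MonotoneExpr e ∧ MonotoneExpr f
  | .or e f => MonotoneExpr e ∧ MonotoneExpr f
  | .not _ => False

section Sensitivity

variable {α : Type*} {L M : Language α} {u v w : List α}

/-- The sensitive positions of `w` with respect to `L`: those at which some replacement of the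
letter leads out of `L`. Since `List.set` past the end of the list changes nothing, only positions
below `w.length` count when `w ∈ L`. -/
def sensitivePositions (L : Language α) (w : List α) : Set ℕ :=
  {i | ∃ x, w.set i x ∉ L}

/-- The sensitivity of a language: the supremum of the number of sensitive positions over its own
words only, as for the 1-sensitivity of Boolean function complexity. -/
noncomputable def sensitivity (L : Language α) : ℕ∞ :=
  ⨆ w ∈ L, (sensitivePositions L w).encard

theorem encard_sensitivePositions_le_sensitivity (hw : w ∈ L) :
    (sensitivePositions L w).encard ≤ sensitivity L :=
  le_iSup₂ (f := fun w (_ : w ∈ L) => (sensitivePositions L w).encard) w hw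

theorem sensitivity_le_iff {n : ℕ∞} :
    sensitivity L ≤ n ↔ ∀ w ∈ L, (sensitivePositions L w).encard ≤ n :=
  iSup₂_le_iff

theorem sensitivePositions_subset_Iio_length (hw : w ∈ L) :
    sensitivePositions L w ⊆ Set.Iio w.length := by
  rintro i ⟨x, hx⟩
  by_contra hi
  exact hx (by rwa [List.set_eq_of_length_le (not_lt.1 hi)])

theorem encard_Iio_nat (n : ℕ) : (Set.Iio n).encard = n := by
  rw [← Finset.coe_Iio, Set.encard_coe_eq_coe_finsetCard, Nat.card_Iio]

theorem sensitivity_le_of_forall_length_le {n : ℕ∞} (h : ∀ w ∈ L, (w.length : ℕ∞) ≤ n) :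
    sensitivity L ≤ n :=
  sensitivity_le_iff.2 fun w hw =>
    calc (sensitivePositions L w).encard
        ≤ (Set.Iio w.length).encard :=
        Set.encard_le_encard (sensitivePositions_subset_Iio_length hw)
      _ = w.length := encard_Iio_nat _
      _ ≤ n := h w hw

theorem sensitivity_top : sensitivity (⊤ : Language α) = 0 := by
  refine nonpos_iff_eq_zero.1 (sensitivity_le_iff.2 fun w _ => ?_)
  have hempty : sensitivePositions ⊤ w = ∅ :=
    Set.eq_empty_of_forall_notMem fun _ ⟨_, hx⟩ => hx trivial
  rw [hempty, Set.encard_empty]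

theorem sensitivePositions_anti (h : L ≤ M) (w : List α) :
    sensitivePositions M w ⊆ sensitivePositions L w :=
  fun _ ⟨x, hx⟩ => ⟨x, fun hL => hx (h hL)⟩

theorem sensitivePositions_inf (L M : Language α) (w : List α) :
    sensitivePositions (L ⊓ M) w = sensitivePositions L w ∪ sensitivePositions M w := by
  ext i
  have hmem (x : α) : w.set i x ∉ L ⊓ M ↔ w.set i x ∉ L ∨ w.set i x ∉ M := not_and_or
  simp only [sensitivePositions, Set.mem_union, Set.mem_ofPred_eq, hmem, exists_or]

theorem sensitivity_inf_le (L M : Language α) :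
    sensitivity (L ⊓ M) ≤ sensitivity L + sensitivity M :=
  sensitivity_le_iff.2 fun w hw =>
    calc (sensitivePositions (L ⊓ M) w).encard
        = (sensitivePositions L w ∪ sensitivePositions M w).encard := by rw [sensitivePositions_inf]
      _ ≤ (sensitivePositions L w).encard + (sensitivePositions M w).encard :=
        Set.encard_union_le _ _
      _ ≤ sensitivity L + sensitivity M :=
        add_le_add (encard_sensitivePositions_le_sensitivity hw.1)
          (encard_sensitivePositions_le_sensitivity hw.2)

theorem sensitivity_sup_le (L M : Language α) :
    sensitivity (L ⊔ M) ≤ max (sensitivity L) (sensitivity M) := by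
  refine sensitivity_le_iff.2 fun w hw => ?_
  rcases hw with hL | hM
  · refine le_max_of_le_left ?_
    exact (Set.encard_le_encard (sensitivePositions_anti le_sup_left w)).trans
      (encard_sensitivePositions_le_sensitivity hL)
  · refine le_max_of_le_right ?_
    exact (Set.encard_le_encard (sensitivePositions_anti le_sup_right w)).trans
      (encard_sensitivePositions_le_sensitivity hM)

theorem sensitivePositions_mul_append_subset (hu : u ∈ L) (hv : v ∈ M) :
    sensitivePositions (L * M) (u ++ v) ⊆
      sensitivePositions L u ∪ (u.length + ·) '' sensitivePositions M v := by
  rintro i ⟨x, hx⟩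
  rcases lt_or_ge i u.length with hi | hi
  · refine Or.inl ⟨x, fun hmem => hx ?_⟩
    rw [List.set_append_left i x hi]
    exact Language.append_mem_mul hmem hv
  · refine Or.inr ⟨i - u.length, ⟨x, fun hmem => hx ?_⟩, Nat.add_sub_cancel' hi⟩
    rw [List.set_append_right i x hi]
    exact Language.append_mem_mul hu hmem

theorem sensitivity_mul_le (L M : Language α) :
    sensitivity (L * M) ≤ sensitivity L + sensitivity M := by
  rw [sensitivity_le_iff]
  rintro _ ⟨u, hu, v, hv, rfl⟩
  calc (sensitivePositions (L * M) (u ++ v)).encard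
      ≤ (sensitivePositions L u ∪ (u.length + ·) '' sensitivePositions M v).encard :=
        Set.encard_le_encard (sensitivePositions_mul_append_subset hu hv)
    _ ≤ (sensitivePositions L u).encard + ((u.length + ·) '' sensitivePositions M v).encard :=
        Set.encard_union_le _ _
    _ ≤ sensitivity L + sensitivity M :=
        add_le_add (encard_sensitivePositions_le_sensitivity hu)
          ((Set.encard_image_le _ _).trans (encard_sensitivePositions_le_sensitivity hv))

/-- The language `S*` of all words over the subalphabet `S`. -/
def subalphabetStar (S : Set α) : Language α :=
  {w | ∀ x ∈ w, x ∈ S}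

theorem sensitivePositions_subalphabetStar {S : Set α} (hS : S ≠ Set.univ)
    (hw : w ∈ subalphabetStar S) :
    sensitivePositions (subalphabetStar S) w = Set.Iio w.length := by
  obtain ⟨x, hx⟩ := (Set.ne_univ_iff_exists_notMem S).1 hS
  exact (sensitivePositions_subset_Iio_length hw).antisymm fun _ hi =>
    ⟨x, fun hmem => hx (hmem x (List.mem_set hi x))⟩

theorem sensitivity_subalphabetStar {S : Set α} (hS : S.Nonempty) (hSproper : S ≠ Set.univ) :
    sensitivity (subalphabetStar S) = ⊤ := by
  obtain ⟨c, hc⟩ := hS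
  refine ENat.eq_top_iff_forall_ge.2 fun n => ?_
  have hmem : List.replicate n c ∈ subalphabetStar S := fun _ hx =>
    List.eq_of_mem_replicate hx ▸ hc
  calc (n : ℕ∞) = (sensitivePositions (subalphabetStar S) (List.replicate n c)).encard := by
        rw [sensitivePositions_subalphabetStar hSproper hmem, encard_Iio_nat,
          List.length_replicate]
    _ ≤ sensitivity (subalphabetStar S) := encard_sensitivePositions_le_sensitivity hmem

end Sensitivity

section LikeLanguages

variable {α : Type}

/-- The language of a single pattern symbol. Mathlib's `Language` is used for its product, which
makes the language of a pattern the product of the languages of its symbols. -/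
def LikeSym.language (s : LikeSym α) : Language α :=
  {u | SymMatches s u}

/-- The language of a LIKE pattern. -/
def patternLanguage (p : List (LikeSym α)) : Language α :=
  {w | Matches p w}

/-- The language of a LIKE expression. -/
def LikeExpr.language (e : LikeExpr α) : Language α :=
  {w | EMatches e w}

theorem patternLanguage_nil : patternLanguage ([] : List (LikeSym α)) = 1 :=
  rfl

theorem patternLanguage_cons (s : LikeSym α) (p : List (LikeSym α)) :
    patternLanguage (s :: p) = s.language * patternLanguage p := by
  ext w
  constructor
  · rintro ⟨u, v, rfl, hu, hv⟩
    exact Language.append_mem_mul hu hv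
  · rintro ⟨u, hu, v, hv, rfl⟩
    exact ⟨u, v, rfl, hu, hv⟩

theorem LikeSym.sensitivity_language_le_one (s : LikeSym α) : sensitivity s.language ≤ 1 := by
  cases s with
  | const a =>
    refine sensitivity_le_of_forall_length_le fun u (hu : u = [a]) => ?_
    simp [hu]
  | wild =>
    refine sensitivity_le_of_forall_length_le fun u (hu : u.length = 1) => ?_
    simp [hu]
  | percent => exact sensitivity_top.trans_le zero_le_one

theorem sensitivity_patternLanguage_le_length (p : List (LikeSym α)) :
    sensitivity (patternLanguage p) ≤ p.length := by
  induction p with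
  | nil =>
    refine sensitivity_le_of_forall_length_le fun w hw => ?_
    rw [patternLanguage_nil, Language.mem_one] at hw
    simp [hw]
  | cons s p ih =>
    calc sensitivity (patternLanguage (s :: p))
        = sensitivity (s.language * patternLanguage p) := by rw [patternLanguage_cons]
      _ ≤ sensitivity s.language + sensitivity (patternLanguage p) := sensitivity_mul_le _ _
      _ ≤ 1 + p.length := add_le_add s.sensitivity_language_le_one ih
      _ = (s :: p).length := by rw [List.length_cons, Nat.cast_succ, add_comm]

theorem MonotoneExpr.sensitivity_language_lt_top {e : LikeExpr α} (he : MonotoneExpr e) :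
    sensitivity e.language < ⊤ := by
  induction e with
  | pat p => exact (sensitivity_patternLanguage_le_length p).trans_lt (ENat.natCast_lt_top _)
  | and e f ihe ihf =>
    exact (sensitivity_inf_le e.language f.language).trans_lt
      (WithTop.add_lt_top.2 ⟨ihe he.1, ihf he.2⟩)
  | or e f ihe ihf =>
    exact (sensitivity_sup_le e.language f.language).trans_lt (max_lt (ihe he.1) (ihf he.2))
  | not => exact he.elim

theorem MonotoneExpr.language_ne_subalphabetStar {e : LikeExpr α} (he : MonotoneExpr e)
    {S : Set α} (hS : S.Nonempty) (hSproper : S ≠ Set.univ) :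
    e.language ≠ subalphabetStar S := fun h =>
  he.sensitivity_language_lt_top.ne (h ▸ sensitivity_subalphabetStar hS hSproper)

theorem matches_percent_const_percent_iff (b : α) (w : List α) :
    Matches [.percent, .const b, .percent] w ↔ b ∈ w := by
  constructor
  · rintro ⟨u, _, rfl, -, _, v, rfl, rfl, -⟩
    simp
  · intro hb
    obtain ⟨u, v, rfl⟩ := List.append_of_mem hb
    exact ⟨u, b :: v, rfl, trivial, [b], v, rfl, rfl, v, [], by simp, trivial, rfl⟩

theorem LikeExpr.language_not_percent_const_percent (b : α) :
    (LikeExpr.not (.pat [.percent, .const b, .percent])).language = subalphabetStar {b}ᶜ := by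
  ext w
  calc ¬ Matches [.percent, .const b, .percent] w
      ↔ b ∉ w := (matches_percent_const_percent_iff b w).not
    _ ↔ ∀ x ∈ w, x ≠ b := List.forall_mem_ne'.symm

end LikeLanguages

/-- Over an alphabet with at least two symbols, no monotone LIKE expression has
language exactly `Σ'*` for a nonempty proper subset `Σ' ⊊ Σ`; hence monotone
LIKE expressions are strictly weaker than general LIKE expressions. -/
theorem monotone_like_cannot_express_subalphabet_star {α : Type}
    (a b : α) (hab : a ≠ b) (S : Set α) (hS : S.Nonempty) (hSproper : S ≠ Set.univ) :
    (∀ e : LikeExpr α, MonotoneExpr e →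
      {w : List α | EMatches e w} ≠ {w : List α | ∀ x ∈ w, x ∈ S}) ∧
    (∃ L : Set (List α), (∃ e : LikeExpr α, L = {w : List α | EMatches e w}) ∧
      ¬ ∃ e : LikeExpr α, MonotoneExpr e ∧ L = {w : List α | EMatches e w}) := by
  refine ⟨fun e he => he.language_ne_subalphabetStar hS hSproper, subalphabetStar {b}ᶜ,
    ⟨_, (LikeExpr.language_not_percent_const_percent b).symm⟩, ?_⟩
  rintro ⟨e, he, heq⟩
  have hproper : ({b}ᶜ : Set α) ≠ Set.univ := by simp
  exact he.language_ne_subalphabetStar ⟨a, hab⟩ hproper heq.symm
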